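/- Let p be a prime with p > 7 and let (G,∘) be a group of order p. Then δ(G,∘) = 6p − 18; that is, the minimum Hamming distance between the group operation ∘ and any other group operation on G equals 6p − 18. -/

import Mathlib

/-- `star` is a group operation on `G`. -/
def IsGroupOp {G : Type*} (star : G → G → G) : Prop :=
  ∃ (e : G) (inv : G → G),
    (∀ a b c : G, star (star a b) c = star a (star b c)) ∧
    (∀ a : G, star e a = a) ∧ (∀ a : G, star a e = a) ∧
    (∀ a : G, star (inv a) a = e) ∧ (∀ a : G, star a (inv a) = e)

/-- The Hamming distance between two binary operations on a finite set. -/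
def opDist {G : Type*} [Fintype G] [DecidableEq G] (f g : G → G → G) : ℕ :=
  (Finset.univ.filter fun p : G × G => f p.1 p.2 ≠ g p.1 p.2).card

/-- `δ(G,∘)`: the minimum Hamming distance between the group operation of `G`
and any other group operation on `G`. -/
noncomputable def groupDelta (G : Type*) [Group G] [Fintype G] [DecidableEq G] : ℕ :=
  sInf {d : ℕ | ∃ star : G → G → G, IsGroupOp star ∧
    star ≠ (fun a b => a * b) ∧ d = opDist (fun a b : G => a * b) star}

/-!
Transported to `ZMod p`, a second group operation becomes `x ⋆ y = f⁻¹ (f x + f y)` for a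
permutation `f`, and its distance from addition is the number of pairs at which `f` fails to be
additive. The permutation exchanging `1` and `-1` has `6 * p - 18` such pairs: `p - 2` in each of
the rows `±1`, three in each of the rows `±2`, none in the row `0` and four in every other row.

For the lower bound, let `a ≠ 0` be a row of `f` with the fewest defects. Subtracting the linear map
`x ↦ (f a / a) * x` does not change the defects and yields `e` with `e a = 0`. Every level set of
`e` is hit by a defect in row `a`, so every nonzero row has at least as many defects as `e` has
values; there are at least three values, and six or more suffice. The non-defects in the rows `y`
with `e y = w` are the elements that translation by `y` carries from the fiber over `u` to the fiber
over `u + w`. For `w = 0` their number is bounded by the rigidity of sets that almost coincide with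
two of their translates, for `w ≠ 0` by the Cauchy-Davenport inequality. If all fibers have at most
five elements, a check of the finitely many possible fiber sizes shows that the rows together fall
short of six defects per row by at most `18`; a set of four values in arithmetic progression needs
in addition `∑ x, e x = 0`, which constrains the fiber sizes modulo `p`. If some fiber has `n ≥ 6`
elements, following it along the multiples of `e y` into an empty fiber produces `n` defects in
every row `y` with `e y ≠ 0`.
-/

section AdditivityDefects

open Finset
open scoped Pointwise

section Fiber

variable {G H : Type*} [Fintype G] [DecidableEq H]

/-- The fiber of a function on a finite type over a point, as a finite set. -/
def fiber (f : G → H) (u : H) : Finset G :=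
  univ.filter fun x => f x = u

lemma mem_fiber {f : G → H} {x : G} {u : H} : x ∈ fiber f u ↔ f x = u := by
  simp [fiber]

lemma card_fiber_pos_iff {f : G → H} {u : H} : 0 < #(fiber f u) ↔ u ∈ univ.image f := by
  simp [card_pos, Finset.Nonempty, mem_fiber]

lemma sum_image_sum_fiber {M : Type*} [AddCommMonoid M] (f : G → H) (g : G → M) :
    ∑ u ∈ univ.image f, ∑ x ∈ fiber f u, g x = ∑ x, g x :=
  sum_fiberwise_of_maps_to (fun x _ => mem_image_of_mem f (mem_univ x)) g

lemma sum_image_card_fiber (f : G → H) : ∑ u ∈ univ.image f, #(fiber f u) = Fintype.card G :=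
  (card_eq_sum_card_image f univ).symm

lemma card_fiber_add_card_image_le {f : G → H} {u : H} (hu : u ∈ univ.image f) :
    #(fiber f u) + #(univ.image f) ≤ Fintype.card G + 1 := by
  have hpos : #((univ.image f).erase u) ≤ ∑ v ∈ (univ.image f).erase u, #(fiber f v) :=
    card_eq_sum_ones ((univ.image f).erase u) ▸
      sum_le_sum fun v hv => card_fiber_pos_iff.2 (mem_of_mem_erase hv)
  have hsum := sum_image_card_fiber f
  rw [← add_sum_erase _ _ hu] at hsum
  rw [card_erase_of_mem hu] at hpos
  omega

lemma le_card_image_add_mul_card_filter {f : G → H} (h5 : ∀ u, #(fiber f u) ≤ 5) :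
    Fintype.card G ≤ #(univ.image f) + 4 * #((univ.image f).filter fun u => 2 ≤ #(fiber f u)) := by
  calc Fintype.card G = ∑ u ∈ univ.image f, #(fiber f u) := by rw [sum_image_card_fiber]
    _ ≤ ∑ u ∈ univ.image f, (1 + if 2 ≤ #(fiber f u) then 4 else 0) := sum_le_sum fun u _ => by
        have := h5 u
        split_ifs <;> omega
    _ = _ := by rw [sum_add_distrib, ← sum_filter, sum_const, sum_const]; simp [mul_comm]

end Fiber

section Defects

variable {G H : Type*} [Fintype G] [DecidableEq H]

/-- The pairs at which `f` fails to be additive. -/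
def badPairs [Add G] [Add H] (f : G → H) : Finset (G × G) :=
  univ.filter fun q => f (q.1 + q.2) ≠ f q.1 + f q.2

/-- The row of `y` in the table of additivity defects of `f`: the first coordinates of the pairs
`(x, y)` at which `f` fails to be additive. -/
def badRow [Add G] [Add H] (f : G → H) (y : G) : Finset G :=
  univ.filter fun x => f (x + y) ≠ f x + f y

lemma mem_badRow [Add G] [Add H] {f : G → H} {x y : G} :
    x ∈ badRow f y ↔ f (x + y) ≠ f x + f y := by
  simp [badRow]

lemma card_badPairs [Add G] [Add H] (f : G → H) : #(badPairs f) = ∑ y, #(badRow f y) := by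
  simp only [badPairs, badRow, card_filter]
  rw [← univ_product_univ, sum_product_right]

lemma badRow_sub_addMonoidHom [AddZeroClass G] [AddCommGroup H] (f : G → H) (φ : G →+ H) (y : G) :
    badRow (fun x => f x - φ x) y = badRow f y := by
  ext x
  rw [mem_badRow, mem_badRow, map_add, sub_add_sub_comm, Ne, sub_left_inj]

lemma badRow_eq_univ [AddLeftCancelMonoid G] [AddZeroClass H] {f : G → H}
    (hf : Function.Injective f) {y : G} (hy : y ≠ 0) (hfy : f y = 0) : badRow f y = univ := by
  refine eq_univ_iff_forall.2 fun x => mem_badRow.2 fun h => hy ?_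
  rw [hfy, add_zero] at h
  simpa using hf h

lemma mul_card_le_card_badPairs_add [Add G] [Add H] {f : G → H} {n : ℕ} {d : H → ℕ}
    (hd : ∀ w ∈ univ.image f, n * #(fiber f w) ≤ ∑ y ∈ fiber f w, #(badRow f y) + d w) :
    n * Fintype.card G ≤ #(badPairs f) + ∑ w ∈ univ.image f, d w := by
  rw [card_badPairs, ← sum_image_sum_fiber f, ← sum_image_card_fiber f, mul_sum,
    ← sum_add_distrib]
  exact sum_le_sum hd

lemma card_fiber_le_card_fiber_add [AddGroup G] [DecidableEq G] [Add H] {f : G → H} (y : G)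
    (t : H) :
    #(fiber f t) ≤ #(fiber f (t + f y)) + #(fiber f t ∩ badRow f y) := by
  have hsub : fiber f t \ badRow f y ⊆ (fiber f (t + f y)).image (fun x => x - y) := by
    intro x hx
    simp only [mem_sdiff, mem_fiber, mem_badRow, not_not] at hx
    exact mem_image.2 ⟨x + y, by rw [mem_fiber, hx.2, hx.1], add_sub_cancel_right x y⟩
  have hle := (card_le_card hsub).trans card_image_le
  have hsplit := card_sdiff_add_card_inter (fiber f t) (badRow f y)
  omega

lemma sum_card_badRow_fiber_zero_add_le [Add G] [AddZeroClass H] {f : G → H} {n : ℕ}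
    (hn : ∀ y, f y ≠ 0 → n ≤ #(badRow f y)) :
    ∑ y ∈ fiber f 0, #(badRow f y) + (Fintype.card G - #(fiber f 0)) * n ≤ #(badPairs f) := by
  classical
  have hcompl : #(fiber f 0)ᶜ = Fintype.card G - #(fiber f 0) := card_compl _
  rw [card_badPairs, ← sum_add_sum_compl (fiber f 0), ← hcompl]
  exact Nat.add_le_add_left (card_nsmul_le_sum _ _ n fun y hy => hn y (by
    simpa [mem_fiber] using hy)) _

lemma mul_le_card_badPairs [AddZeroClass G] [Add H] {f : G → H} {n : ℕ}
    (h : ∀ y ≠ 0, n ≤ #(badRow f y)) :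
    n * (Fintype.card G - 1) ≤ #(badPairs f) := by
  classical
  calc n * (Fintype.card G - 1) = ∑ _y ∈ univ.erase (0 : G), n := by
        rw [sum_const, card_erase_of_mem (mem_univ _), card_univ, smul_eq_mul, mul_comm]
    _ ≤ ∑ y ∈ univ.erase (0 : G), #(badRow f y) :=
        sum_le_sum fun y hy => h y (ne_of_mem_erase hy)
    _ ≤ ∑ y, #(badRow f y) := sum_le_sum_of_subset (erase_subset _ _)
    _ = #(badPairs f) := (card_badPairs f).symm

end Defects

section Overlap

variable {G : Type*} [DecidableEq G]

/-- The number of elements of `A` that translation by `y` moves into `C`. -/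
def overlap [Add G] (A C : Finset G) (y : G) : ℕ :=
  #(A.filter fun x => x + y ∈ C)

lemma overlap_le_left [Add G] (A C : Finset G) (y : G) : overlap A C y ≤ #A :=
  card_filter_le _ _

lemma add_mem_of_overlap_eq [Add G] {A C : Finset G} {y : G} (h : overlap A C y = #A) {x : G}
    (hx : x ∈ A) : x + y ∈ C :=
  (card_filter_eq_iff.1 h) x hx

lemma sum_overlap_le_mul [Add G] (A C Y : Finset G) : ∑ y ∈ Y, overlap A C y ≤ #A * #Y := by
  rw [mul_comm]
  exact sum_le_card_nsmul Y _ (#A) fun y _ => overlap_le_left A C y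

variable [AddGroup G]

lemma overlap_neg (A C : Finset G) (y : G) : overlap A C (-y) = overlap C A y := by
  refine card_bij' (fun x _ => x + -y) (fun x _ => x + y) ?_ ?_ ?_ ?_ <;>
    simp +contextual

lemma overlap_self_zero (E : Finset G) : overlap E E 0 = #E := by
  simp [overlap]

lemma overlap_add_overlap_compl [Fintype G] (A C : Finset G) (y : G) :
    overlap A C y + overlap A Cᶜ y = #A := by
  simpa [overlap] using card_filter_add_card_filter_not (s := A) fun x => x + y ∈ C

lemma overlap_self_add_card_compl [Fintype G] (E : Finset G) (y : G) :
    overlap E E y + #Eᶜ = overlap Eᶜ Eᶜ y + #E := by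
  have h := overlap_add_overlap_compl E E y
  have h' := overlap_add_overlap_compl Eᶜ E (-y)
  rw [overlap_neg, overlap_neg] at h'
  omega

lemma card_badRow_add_sum_overlap [Fintype G] {H : Type*} [DecidableEq H] [Add H] (f : G → H)
    (y : G) :
    #(badRow f y) + ∑ u ∈ univ.image f, overlap (fiber f u) (fiber f (u + f y)) y =
      Fintype.card G := by
  have hsum : ∑ u ∈ univ.image f, overlap (fiber f u) (fiber f (u + f y)) y =
      ∑ u ∈ univ.image f, ∑ x ∈ fiber f u, if f (x + y) = f x + f y then 1 else 0 := by
    refine sum_congr rfl fun u _ => ?_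
    rw [overlap, card_filter]
    refine sum_congr rfl fun x hx => ?_
    rw [mem_fiber] at hx
    simp [mem_fiber, hx]
  rw [hsum, sum_image_sum_fiber, ← card_filter, badRow, add_comm]
  simpa using card_filter_add_card_filter_not (s := univ) fun x => f (x + y) = f x + f y

lemma sum_card_badRow_fiber_add_sum_overlap [Fintype G] {H : Type*} [DecidableEq H] [Add H]
    (f : G → H) (w : H) :
    ∑ y ∈ fiber f w, #(badRow f y) +
        ∑ u ∈ univ.image f, ∑ y ∈ fiber f w, overlap (fiber f u) (fiber f (u + w)) y =
      #(fiber f w) * Fintype.card G := by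
  rw [sum_comm, ← sum_add_distrib, ← smul_eq_mul, ← sum_const]
  refine sum_congr rfl fun y hy => ?_
  rw [← mem_fiber.1 hy]
  exact card_badRow_add_sum_overlap f y

end Overlap

section CardVadd

variable {G : Type*} [AddCommGroup G] [DecidableEq G]

lemma card_inter_vadd_self (E : Finset G) (y : G) : #(E ∩ (y +ᵥ E)) = overlap E E y := by
  rw [← overlap_neg, overlap]
  congr 1
  ext x
  simp [← neg_vadd_mem_iff, add_comm]

lemma card_union_vadd_add_overlap (E : Finset G) (y : G) :
    #(E ∪ (y +ᵥ E)) + overlap E E y = 2 * #E := by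
  rw [← card_inter_vadd_self, card_union_add_card_inter, card_vadd_finset, two_mul]

end CardVadd

variable {p : ℕ} [Fact p.Prime]

section Progression

lemma natCast_ne_zero_of_lt {n : ℕ} (hn : n ≠ 0) (hnp : n < p) : (n : ZMod p) ≠ 0 := fun h =>
  hn (Nat.eq_zero_of_dvd_of_lt ((ZMod.natCast_eq_zero_iff _ _).1 h) hnp)

lemma injOn_add_natCast_mul {w : ZMod p} (hw : w ≠ 0) (v : ZMod p) :
    Set.InjOn (fun j : ℕ => v + j * w) (Set.Iio p) := fun _ hi _ hj h =>
  CharP.natCast_injOn_Iio (ZMod p) p hi hj (mul_right_cancel₀ hw (add_left_cancel h))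

lemma add_val_div_mul {w : ZMod p} (hw : w ≠ 0) (v u : ZMod p) :
    v + (((u - v) / w).val : ZMod p) * w = u := by
  rw [ZMod.natCast_zmod_val, div_mul_cancel₀ _ hw, add_sub_cancel]

lemma sum_range_add_natCast_mul {M : Type*} [AddCommMonoid M] {w : ZMod p} (hw : w ≠ 0)
    (v : ZMod p) (F : ZMod p → M) : ∑ j ∈ range p, F (v + j * w) = ∑ u, F u :=
  sum_nbij (fun j : ℕ => v + j * w) (fun _ _ => mem_univ _)
    (by simpa using injOn_add_natCast_mul hw v)
    (fun u _ => ⟨((u - v) / w).val, by simp [ZMod.val_lt], add_val_div_mul hw v u⟩) fun _ _ => rfl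

lemma mem_of_forall_add_mem {S : Set (ZMod p)} {w : ZMod p} (hw : w ≠ 0)
    (h : ∀ x ∈ S, x + w ∈ S) {x : ZMod p} (hx : x ∈ S) (y : ZMod p) : y ∈ S := by
  have hmul : ∀ j : ℕ, x + j * w ∈ S := by
    intro j
    induction j with
    | zero => simpa using hx
    | succ j ih => simpa [add_mul, add_assoc] using h _ ih
  exact add_val_div_mul hw x y ▸ hmul _

lemma overlap_self_lt {E : Finset (ZMod p)} (hE : E.Nonempty) (hE' : #E < p) {y : ZMod p}
    (hy : y ≠ 0) : overlap E E y < #E := by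
  refine lt_of_le_of_ne (overlap_le_left E E y) fun h => ?_
  obtain ⟨x, hx⟩ := hE
  have : E = univ := eq_univ_iff_forall.2 fun z =>
    mem_of_forall_add_mem (S := (E : Set (ZMod p))) hy (fun x hx => add_mem_of_overlap_eq h hx) hx z
  simp [this] at hE'

lemma exists_filter_add_neg_notMem_eq_singleton {E : Finset (ZMod p)} {w : ZMod p} (hw : w ≠ 0)
    (hE : E.Nonempty) (hE' : #E < p) (h : #E ≤ overlap E E w + 1) :
    ∃ c, E.filter (fun x => x + -w ∉ E) = {c} := by
  rw [← card_eq_one]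
  have hsplit := card_filter_add_card_filter_not (s := E) fun x => x + -w ∈ E
  have hlt := overlap_self_lt hE hE' hw
  rw [← overlap_neg] at h hlt
  simp only [overlap] at h hlt
  omega

lemma eq_image_range_of_card_le_overlap {E : Finset (ZMod p)} {w : ZMod p} (hw : w ≠ 0)
    (hE : E.Nonempty) (hE' : #E < p) (h : #E ≤ overlap E E w + 1) :
    ∃ c, E = (range #E).image fun j : ℕ => c + j * w := by
  obtain ⟨c, hc⟩ := exists_filter_add_neg_notMem_eq_singleton hw hE hE' h
  have hcE : c ∈ E := (mem_filter.1 (hc ▸ mem_singleton_self c)).1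
  have hpred : ∀ x ∈ E, x ≠ c → x + -w ∈ E := fun x hx hxc => by
    by_contra hx'
    exact hxc (mem_singleton.1 (hc ▸ mem_filter.2 ⟨hx, hx'⟩))
  have hsub : (range #E).image (fun j : ℕ => c + j * w) ⊆ E := by
    by_contra hnot
    obtain ⟨j, hj, hjE⟩ : ∃ j < #E, c + (j : ZMod p) * w ∉ E := by
      simpa [image_subset_iff] using hnot
    have hex : ∃ i : ℕ, c + (i : ZMod p) * w ∉ E := ⟨j, hjE⟩
    set i := Nat.find hex with hi
    obtain ⟨x, hxE, hx⟩ : ∃ x ∈ E, x ∉ (range i).image fun j : ℕ => c + j * w :=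
      exists_mem_notMem_of_card_lt_card ((card_image_le.trans_eq (card_range i)).trans_lt
        ((Nat.find_min' hex hjE).trans_lt hj))
    have hi0 : 0 < i := (Nat.find_pos hex).2 (by simpa using hcE)
    have hmemc : c ∈ (range i).image fun j : ℕ => c + j * w :=
      mem_image.2 ⟨0, mem_range.2 hi0, by simp⟩
    -- What lies outside the initial run starting at `c` is closed under subtraction of `w`.
    refine (mem_of_forall_add_mem (S := {x | x ∈ E ∧ x ∉ (range i).image fun j : ℕ => c + j * w})
      (neg_ne_zero.2 hw) ?_ ⟨hxE, hx⟩ c).2 hmemc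
    rintro z ⟨hzE, hz⟩
    refine ⟨hpred z hzE fun hzc => hz (hzc ▸ hmemc), fun hz' => ?_⟩
    obtain ⟨m, hm, hmz⟩ := mem_image.1 hz'
    have hz_eq : z = c + (m + 1 : ℕ) * w := by push_cast; linear_combination -hmz
    rcases lt_or_eq_of_le (show m + 1 ≤ i from mem_range.1 hm) with hlt | heq
    · exact hz (mem_image.2 ⟨m + 1, mem_range.2 hlt, hz_eq.symm⟩)
    · exact Nat.find_spec hex (by rwa [← hi, ← heq, ← hz_eq])
  refine ⟨c, (eq_of_subset_of_card_le hsub ?_).symm⟩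
  rw [card_image_of_injOn ((injOn_add_natCast_mul hw c).mono fun j hj => ?_), card_range]
  exact (mem_range.1 (mem_coe.1 hj)).trans hE'

end Progression

section SelfOverlap

variable {E : Finset (ZMod p)}

lemma card_union_vadd_vadd_le {y z : ZMod p} (hE : 2 ≤ #E) (hE' : #E < p) (hz : z ≠ 0)
    (hyE : #E ≤ overlap E E y + 1) (hzE : #E ≤ overlap E E z + 1) :
    #((E ∪ (z +ᵥ E)) ∪ (y +ᵥ (E ∪ (z +ᵥ E)))) ≤ #E + 2 := by
  set I := E ∩ (y +ᵥ E) with hI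
  set P := E ∪ (z +ᵥ E) with hP
  have hI_card : #I = overlap E E y := card_inter_vadd_self E y
  have hI_grow := card_union_vadd_add_overlap I z
  have hP_card := card_union_vadd_add_overlap E z
  have hP_grow := card_union_vadd_add_overlap P y
  have hIE : #I ≤ #E := card_le_card inter_subset_left
  have hI_lt : overlap I I z < #I := overlap_self_lt (card_pos.1 (by omega)) (by omega) hz
  have hIP : I ∪ (z +ᵥ I) ⊆ P ∩ (y +ᵥ P) := by
    simp only [hI, hP, vadd_finset_union, vadd_finset_inter]
    rw [vadd_comm z y]
    intro x
    simp only [mem_union, mem_inter]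
    tauto
  have hle := card_le_card hIP
  rw [card_inter_vadd_self] at hle
  rw [← hP] at hP_card
  omega

lemma card_add_three_le_card_union_vadd_vadd {y z : ZMod p} (hE : E.Nonempty) (hE' : #E + 3 ≤ p)
    (hy : y ≠ 0) (hz : z ≠ 0) (hzy : z ≠ y) (hzy' : z ≠ -y) :
    #E + 3 ≤ #((E ∪ (z +ᵥ E)) ∪ (y +ᵥ (E ∪ (z +ᵥ E)))) := by
  have hcd := ZMod.cauchy_davenport (Fact.out : p.Prime) hE (t := {0, y, z, y + z}) ⟨0, by simp⟩
  have hfour : #({0, y, z, y + z} : Finset (ZMod p)) = 4 := by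
    have hyz : y + z ≠ 0 := fun h => hzy' (eq_neg_of_add_eq_zero_right h)
    rw [card_insert_of_notMem, card_insert_of_notMem, card_pair] <;>
      simp [hy, hz, hy.symm, hz.symm, hyz.symm, hzy.symm]
  have hsub : E + {0, y, z, y + z} ⊆ (E ∪ (z +ᵥ E)) ∪ (y +ᵥ (E ∪ (z +ᵥ E))) := by
    intro x hx
    obtain ⟨u, hu, v, hv, rfl⟩ := mem_add.1 hx
    simp only [mem_union, ← neg_vadd_mem_iff, vadd_eq_add]
    simp only [mem_insert, mem_singleton] at hv
    rcases hv with rfl | rfl | rfl | rfl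
    · simp [hu]
    · simp [add_comm, hu]
    · simp [add_comm, hu]
    · right; right; convert hu using 1; ring
  have hle := card_le_card hsub
  omega

lemma eq_or_eq_neg_of_card_le_overlap {y z : ZMod p} (hE : 2 ≤ #E) (hE' : #E + 2 ≤ p)
    (hp : 5 ≤ p) (hy : y ≠ 0) (hz : z ≠ 0) (hyE : #E ≤ overlap E E y + 1)
    (hzE : #E ≤ overlap E E z + 1) : z = y ∨ z = -y := by
  by_contra! hne
  wlog hE3 : #E + 3 ≤ p generalizing E
  · have hcompl : #Eᶜ = p - #E := by rw [card_compl, ZMod.card]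
    have hy' := overlap_self_add_card_compl E y
    have hz' := overlap_self_add_card_compl E z
    exact this (E := Eᶜ) (by omega) (by omega) (by omega) (by omega) (by omega)
  have hupper := card_union_vadd_vadd_le hE (by omega) hz hyE hzE
  have hlower := card_add_three_le_card_union_vadd_vadd (card_pos.1 (by omega)) hE3 hy hz hne.1
    hne.2
  omega

lemma sum_overlap_self_add_card_le (hE : E.Nonempty) (hE' : #E < p) (Y : Finset (ZMod p)) :
    ∑ y ∈ Y, overlap E E y + (#Y - 1) ≤ #E * #Y := by
  have h : ∑ y ∈ Y, (overlap E E y + 1) ≤ ∑ y ∈ Y, (#E + if y = 0 then 1 else 0) := by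
    refine sum_le_sum fun y _ => ?_
    split_ifs with hy
    · simp [hy, overlap_self_zero]
    · exact overlap_self_lt hE hE' hy
  simp only [sum_add_distrib, sum_const, smul_eq_mul, sum_ite_eq', mul_one] at h
  have h0 := sum_overlap_le_mul E E Y
  rw [mul_comm] at h0 ⊢
  split_ifs at h <;> omega

lemma card_filter_card_le_overlap_le_two (hE : 2 ≤ #E) (hE' : #E + 2 ≤ p) (hp : 5 ≤ p)
    {Y : Finset (ZMod p)} (hY : 0 ∉ Y) : #(Y.filter fun y => #E ≤ overlap E E y + 1) ≤ 2 := by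
  set F := Y.filter fun y => #E ≤ overlap E E y + 1
  rcases F.eq_empty_or_nonempty with h | ⟨y, hy⟩
  · simp [h]
  · have hne : ∀ z ∈ F, z ≠ 0 := fun z hz h => hY (h ▸ (mem_filter.1 hz).1)
    have hsub : F ⊆ {y, -y} := fun z hz => by
      simpa using eq_or_eq_neg_of_card_le_overlap hE hE' hp (hne y hy) (hne z hz)
        (mem_filter.1 hy).2 (mem_filter.1 hz).2
    exact (card_le_card hsub).trans card_le_two

lemma sum_overlap_self_add_card_add_card_le (hE : 2 ≤ #E) (hE' : #E + 2 ≤ p) (hp : 5 ≤ p)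
    (Y : Finset (ZMod p)) :
    ∑ y ∈ Y, overlap E E y + ((#Y - 1) + (#Y - 3)) ≤ #E * #Y := by
  have hE0 : E.Nonempty := card_pos.1 (by omega)
  have hone := sum_overlap_self_add_card_le hE0 (by omega) Y
  set F := (Y.erase 0).filter fun y => #E ≤ overlap E E y + 1 with hF
  have hF_card : #F ≤ 2 := card_filter_card_le_overlap_le_two hE hE' hp (notMem_erase 0 Y)
  have h : ∑ y ∈ Y, (overlap E E y + 2) ≤
      ∑ y ∈ Y, (#E + (if y = 0 then 2 else 0) + if y ∈ F then 1 else 0) := by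
    refine sum_le_sum fun y hyY => ?_
    rcases eq_or_ne y 0 with rfl | hy
    · simp [overlap_self_zero]
    · have hlt := overlap_self_lt hE0 (by omega) hy
      have hyF : y ∈ F ↔ #E ≤ overlap E E y + 1 := by simp [hF, hy, hyY]
      simp only [hyF]
      split_ifs <;> omega
  simp only [sum_add_distrib, sum_const, smul_eq_mul, sum_ite_eq', sum_ite_mem] at h
  have hYF := card_le_card (inter_subset_right : Y ∩ F ⊆ F)
  rw [mul_comm (#Y) (#E)] at h
  split_ifs at h <;> omega

end SelfOverlap

section KernelRows

variable {e : ZMod p → ZMod p}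

lemma le_sum_card_badRow_fiber_zero (hp : 5 ≤ p) (hν : 3 ≤ #(univ.image e)) :
    #(univ.image e) * (#(fiber e 0) - 1) +
        #((univ.image e).filter fun u => 2 ≤ #(fiber e u)) * (#(fiber e 0) - 3) ≤
      ∑ y ∈ fiber e 0, #(badRow e y) := by
  have hloss : ∀ u ∈ univ.image e, ∑ y ∈ fiber e 0, overlap (fiber e u) (fiber e (u + 0)) y +
      ((#(fiber e 0) - 1) + if 2 ≤ #(fiber e u) then #(fiber e 0) - 3 else 0) ≤
        #(fiber e u) * #(fiber e 0) := by
    intro u hu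
    have hcard := card_fiber_add_card_image_le hu
    rw [ZMod.card] at hcard
    rw [add_zero]
    split_ifs with h2
    · exact sum_overlap_self_add_card_add_card_le h2 (by omega) hp _
    · exact sum_overlap_self_add_card_le (card_pos.1 (card_fiber_pos_iff.2 hu)) (by omega) _
  have hsum := sum_le_sum hloss
  rw [sum_add_distrib, sum_add_distrib, sum_const, ← sum_filter, sum_const, ← sum_mul,
    sum_image_card_fiber, smul_eq_mul, smul_eq_mul] at hsum
  have htotal := sum_card_badRow_fiber_add_sum_overlap e 0
  rw [mul_comm (#(fiber e 0))] at htotal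
  omega

end KernelRows

section LargeFiber

variable {e : ZMod p → ZMod p}

lemma card_fiber_le_card_badRow {v : ZMod p} (hv : v ∉ univ.image e) {y : ZMod p} (hy : e y ≠ 0)
    (u : ZMod p) : #(fiber e u) ≤ #(badRow e y) := by
  have htele : ∀ j : ℕ, #(fiber e u) ≤ #(fiber e (u + j * e y)) +
      ∑ i ∈ range j, #(fiber e (u + i * e y) ∩ badRow e y) := by
    intro j
    induction j with
    | zero => simp
    | succ j ih =>
      have hstep := card_fiber_le_card_fiber_add (f := e) y (u + j * e y)
      rw [sum_range_succ, Nat.cast_succ, add_one_mul, ← add_assoc u]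
      omega
  have hv0 : #(fiber e v) = 0 := by rwa [← Nat.le_zero, ← not_lt, card_fiber_pos_iff]
  calc #(fiber e u) ≤ ∑ i ∈ range ((v - u) / e y).val, #(fiber e (u + i * e y) ∩ badRow e y) := by
        simpa only [add_val_div_mul hy, hv0, zero_add] using htele ((v - u) / e y).val
    _ ≤ ∑ i ∈ range p, #(fiber e (u + i * e y) ∩ badRow e y) :=
        sum_le_sum_of_subset (range_mono (ZMod.val_lt _).le)
    _ = ∑ t, #(fiber e t ∩ badRow e y) :=
        sum_range_add_natCast_mul hy u fun t => #(fiber e t ∩ badRow e y)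
    _ = #(badRow e y) := by
        rw [card_eq_sum_card_fiberwise (f := e) (t := univ) fun _ _ => by simp]
        simp only [fiber, filter_inter, univ_inter]

lemma le_card_badPairs_of_six_le_card_fiber (hp : 5 ≤ p) (hν : 3 ≤ #(univ.image e))
    (hν' : #(univ.image e) < p) (hk : 0 < #(fiber e 0)) {u : ZMod p} (hu : 6 ≤ #(fiber e u)) :
    6 * p - 18 ≤ #(badPairs e) := by
  obtain ⟨v, -, hv⟩ : ∃ v ∈ univ, v ∉ univ.image e :=
    exists_mem_notMem_of_card_lt_card (by rwa [card_univ, ZMod.card])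
  obtain ⟨u', -, hu'⟩ := exists_max_image univ (fun u => #(fiber e u)) univ_nonempty
  have hn : 6 ≤ #(fiber e u') := hu.trans (hu' u (mem_univ u))
  have hkn : #(fiber e 0) ≤ #(fiber e u') := hu' 0 (mem_univ 0)
  have hrows := sum_card_badRow_fiber_zero_add_le (f := e) fun y hy =>
    card_fiber_le_card_badRow hv hy u'
  have hkernel : 4 * #(fiber e 0) ≤ ∑ y ∈ fiber e 0, #(badRow e y) + 6 := by
    have hle := le_sum_card_badRow_fiber_zero hp hν
    have hν_mul := Nat.mul_le_mul_right (#(fiber e 0) - 1) hν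
    rcases Nat.lt_or_ge 1 #(fiber e 0) with h2 | h1
    · have hpos : 0 < #((univ.image e).filter fun u => 2 ≤ #(fiber e u)) :=
        card_pos.2 ⟨0, mem_filter.2 ⟨card_fiber_pos_iff.1 hk, h2⟩⟩
      have hpos_mul := Nat.mul_le_mul_right (#(fiber e 0) - 3) hpos
      omega
    · omega
  have hcard := card_fiber_add_card_image_le (card_fiber_pos_iff.1 hk)
  rw [ZMod.card] at hcard
  -- With `m = p - #(fiber e 0)`, the two bounds add up to `6 * p - 18 + (m - 2) * (n - 6)` or more.
  obtain ⟨m, hm⟩ : ∃ m, p - #(fiber e 0) = m + 2 := ⟨p - #(fiber e 0) - 2, by omega⟩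
  obtain ⟨n, hn'⟩ := Nat.exists_eq_add_of_le hn
  rw [ZMod.card, hm, hn'] at hrows
  have : (m + 2) * (6 + n) = m * n + 6 * m + 2 * n + 12 := by ring
  omega

end LargeFiber

section OverlapCap

/-- An upper bound for the total overlap of a set of `a` elements with a set of `c` elements over
`b` distinct translations: at most `a - c + (c - a) + 1` of them can attain `min a c`. -/
def overlapCap (b a c : ℕ) : ℕ :=
  min a c * b - (b - (a - c + (c - a) + 1))

lemma overlapCap_comm (b a c : ℕ) : overlapCap b a c = overlapCap b c a := by
  simp only [overlapCap, min_comm a c, add_comm (a - c)]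

lemma overlapCap_zero_left (b c : ℕ) : overlapCap b 0 c = 0 := by
  simp [overlapCap]

lemma overlapCap_zero_right (b a : ℕ) : overlapCap b a 0 = 0 := by
  simp [overlapCap]

lemma card_filter_overlap_eq_card_le {A C : Finset (ZMod p)} (hA : A.Nonempty) (hC : #C < p)
    (Y : Finset (ZMod p)) : #(Y.filter fun y => overlap A C y = #A) ≤ #C - #A + 1 := by
  set F := Y.filter fun y => overlap A C y = #A
  rcases F.eq_empty_or_nonempty with hF | hF
  · simp [hF]
  · have hcd := ZMod.cauchy_davenport (Fact.out : p.Prime) hA hF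
    have hsub : A + F ⊆ C := add_subset_iff.2 fun x hx y hy =>
      add_mem_of_overlap_eq (mem_filter.1 hy).2 hx
    have hle := card_le_card hsub
    omega

lemma sum_overlap_le_of_card_le {A C : Finset (ZMod p)} (hA : A.Nonempty) (hC : #C < p)
    (hAC : #A ≤ #C) (Y : Finset (ZMod p)) :
    ∑ y ∈ Y, overlap A C y ≤ overlapCap (#Y) (#A) (#C) := by
  have hloss : ∑ y ∈ Y, overlap A C y + #(Y.filter fun y => ¬ overlap A C y = #A) ≤ #A * #Y := by
    rw [card_filter, ← sum_add_distrib, mul_comm]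
    refine sum_le_card_nsmul Y _ (#A) fun y _ => ?_
    have hle := overlap_le_left A C y
    split_ifs <;> omega
  have hfull := card_filter_overlap_eq_card_le hA hC Y
  have hsplit := card_filter_add_card_filter_not (s := Y) fun y => overlap A C y = #A
  rw [overlapCap, min_eq_left hAC]
  omega

lemma sum_overlap_le {A C : Finset (ZMod p)} (hA : #A < p) (hC : #C < p) (Y : Finset (ZMod p)) :
    ∑ y ∈ Y, overlap A C y ≤ overlapCap (#Y) (#A) (#C) := by
  rcases A.eq_empty_or_nonempty with rfl | hA'
  · simp [overlap]
  rcases C.eq_empty_or_nonempty with rfl | hC'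
  · simp [overlap]
  rcases le_total (#A) (#C) with h | h
  · exact sum_overlap_le_of_card_le hA' hC h Y
  · have hneg : ∑ y ∈ Y, overlap A C y = ∑ y ∈ -Y, overlap C A y := by
      simp [← overlap_neg A C]
    rw [hneg, overlapCap_comm, ← card_neg Y]
    exact sum_overlap_le_of_card_le hC' hA h (-Y)

lemma card_fiber_mul_le {e : ZMod p → ZMod p} (hν : 2 ≤ #(univ.image e)) (w : ZMod p) :
    #(fiber e w) * p ≤ ∑ y ∈ fiber e w, #(badRow e y) +
      ∑ u ∈ univ.image e, overlapCap (#(fiber e w)) (#(fiber e u)) (#(fiber e (u + w))) := by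
  have hlt : ∀ u, #(fiber e u) < p := by
    intro u
    rcases (#(fiber e u)).eq_zero_or_pos with h0 | hpos
    · exact h0.trans_lt (Fact.out : p.Prime).pos
    · have hle := card_fiber_add_card_image_le (card_fiber_pos_iff.1 hpos)
      rw [ZMod.card] at hle
      omega
  have htotal := sum_card_badRow_fiber_add_sum_overlap e w
  rw [ZMod.card] at htotal
  rw [← htotal]
  gcongr with u
  exact sum_overlap_le (hlt u) (hlt (u + w)) _

end OverlapCap

section AdjacentSum

/-- The sum of `c a b` over the pairs of consecutive entries `a`, `b` of a list. -/
def adjSum (c : ℕ → ℕ → ℕ) : List ℕ → ℕ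
  | [] => 0
  | [_] => 0
  | a :: b :: l => c a b + adjSum c (b :: l)

variable {c : ℕ → ℕ → ℕ}

lemma adjSum_le_adjSum_cons (a : ℕ) (l : List ℕ) : adjSum c l ≤ adjSum c (a :: l) := by
  cases l <;> simp [adjSum]

lemma adjSum_zero_cons (h0 : ∀ a, c 0 a = 0) (l : List ℕ) : adjSum c (0 :: l) = adjSum c l := by
  cases l <;> simp [adjSum, h0]

lemma adjSum_cons_le_adjSum_cons_filter (h0 : ∀ a, c 0 a = 0) (h0' : ∀ a, c a 0 = 0) (a : ℕ)
    (l : List ℕ) : adjSum c (a :: l) ≤ adjSum c (a :: l.filter (· ≠ 0)) := by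
  induction l generalizing a with
  | nil => exact le_rfl
  | cons b l ih =>
    rcases eq_or_ne b 0 with rfl | hb
    · calc adjSum c (a :: 0 :: l) = adjSum c (0 :: l) := by simp [adjSum, h0']
        _ ≤ adjSum c (0 :: l.filter (· ≠ 0)) := ih 0
        _ = adjSum c (l.filter (· ≠ 0)) := adjSum_zero_cons h0 _
        _ ≤ adjSum c (a :: l.filter (· ≠ 0)) := adjSum_le_adjSum_cons a _
        _ = adjSum c (a :: (0 :: l).filter (· ≠ 0)) := by simp
    · rw [List.filter_cons_of_pos (by simpa using hb)]
      exact Nat.add_le_add_left (ih b) (c a b)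

lemma adjSum_map_range (g : ℕ → ℕ) (n : ℕ) :
    adjSum c ((List.range (n + 1)).map g) = ∑ j ∈ range n, c (g j) (g (j + 1)) := by
  induction n generalizing g with
  | zero => rfl
  | succ n ih =>
    rw [sum_range_succ', ← ih (fun j => g (j + 1)), List.range_succ_eq_map, List.range_succ_eq_map]
    simp [adjSum, add_comm, Function.comp_def]

lemma map_range_add_natCast_mul {α : Type*} (s : ZMod p → α) {w : ZMod p} (hw : w ≠ 0)
    (v : ZMod p) :
    (Multiset.range p).map (fun j : ℕ => s (v + j * w)) = (univ : Finset (ZMod p)).val.map s := by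
  have h := sum_range_add_natCast_mul hw v fun u => ({s u} : Multiset α)
  simpa only [Finset.sum, range_val, ← Function.comp_def, ← Multiset.map_map,
    Multiset.sum_map_singleton] using h

lemma exists_list_sum_le_adjSum (h0 : ∀ a, c 0 a = 0) (h0' : ∀ a, c a 0 = 0) {s : ZMod p → ℕ}
    {v w : ZMod p} (hv : s v = 0) (hw : w ≠ 0) :
    ∃ l : List ℕ, (l : Multiset ℕ) = (univ.val.map s).filter (· ≠ 0) ∧
      ∑ u, c (s u) (s (u + w)) ≤ adjSum c l := by
  set g : ℕ → ℕ := fun j => s (v + j * w) with hg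
  refine ⟨((List.range (p + 1)).map g).filter (· ≠ 0), ?_, ?_⟩
  · rw [← map_range_add_natCast_mul s hw v, List.range_succ, List.map_append, List.filter_append]
    simp [hg, hv, Multiset.range, Multiset.filter_coe]
  · calc ∑ u, c (s u) (s (u + w)) = ∑ j ∈ range p, c (g j) (g (j + 1)) := by
          rw [← sum_range_add_natCast_mul hw v]
          simp [hg, add_one_mul, add_assoc]
      _ = adjSum c ((List.range (p + 1)).map g) := (adjSum_map_range g p).symm
      _ ≤ adjSum c (0 :: (List.range (p + 1)).map g) := adjSum_le_adjSum_cons 0 _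
      _ ≤ adjSum c (0 :: ((List.range (p + 1)).map g).filter (· ≠ 0)) :=
          adjSum_cons_le_adjSum_cons_filter h0 h0' 0 _
      _ = _ := adjSum_zero_cons h0 _

end AdjacentSum

section SmallFibers

variable {e : ZMod p → ZMod p}

-- Arranged along translation by `w`, the fibers over `univ.image e` become one list, whose
-- adjacencies outnumber those in `univ.image e` when the latter is not a progression. Lowering the
-- caps by `t` charges the actual adjacencies separately, so that spurious ones cost less.
lemma sum_overlapCap_le {G : Type*} [Fintype G] [DecidableEq G] [Add G] (e : G → G) (n t : ℕ)
    (w : G) :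
    ∑ u ∈ univ.image e, overlapCap n #(fiber e u) #(fiber e (u + w)) ≤
      ∑ u, (overlapCap n #(fiber e u) #(fiber e (u + w)) - t) +
        t * overlap (univ.image e) (univ.image e) w := by
  calc _ ≤ ∑ u ∈ univ.image e, (overlapCap n #(fiber e u) #(fiber e (u + w)) - t +
            if u + w ∈ univ.image e then t else 0) := ?_
    _ = ∑ u ∈ univ.image e, (overlapCap n #(fiber e u) #(fiber e (u + w)) - t) +
          t * overlap (univ.image e) (univ.image e) w := by
        rw [sum_add_distrib, ← sum_filter, sum_const, smul_eq_mul, mul_comm t, overlap]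
    _ ≤ _ := Nat.add_le_add_right (sum_le_sum_of_subset (subset_univ _)) _
  refine sum_le_sum fun u _ => ?_
  split_ifs with hu
  · exact le_tsub_add
  · rw [← card_fiber_pos_iff, not_lt, Nat.le_zero] at hu
    simp [hu, overlapCap_zero_right]

lemma exists_list_card_fiber (hν : 2 ≤ #(univ.image e)) (hν' : #(univ.image e) < p)
    {w : ZMod p} (hw : w ≠ 0) (t : ℕ) :
    ∃ l : List ℕ, l.length = #(univ.image e) ∧ l.sum = p ∧
      (∀ a, a ∈ l ↔ ∃ u ∈ univ.image e, #(fiber e u) = a) ∧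
      #(fiber e w) * l.sum ≤ ∑ y ∈ fiber e w, #(badRow e y) +
        (adjSum (fun a b => overlapCap #(fiber e w) a b - t) l +
          t * overlap (univ.image e) (univ.image e) w) := by
  obtain ⟨v, -, hv⟩ : ∃ v ∈ univ, v ∉ univ.image e :=
    exists_mem_notMem_of_card_lt_card (by rwa [card_univ, ZMod.card])
  have hv0 : #(fiber e v) = 0 := by rwa [← Nat.le_zero, ← not_lt, card_fiber_pos_iff]
  obtain ⟨l, hl, hle⟩ := exists_list_sum_le_adjSum (s := fun u => #(fiber e u))
    (c := fun a b => overlapCap #(fiber e w) a b - t) (by simp [overlapCap_zero_left])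
    (by simp [overlapCap_zero_right]) hv0 hw
  have hl' : (l : Multiset ℕ) = (univ.image e).val.map fun u => #(fiber e u) := by
    have himage : univ.image e = univ.filter fun u => #(fiber e u) ≠ 0 := by
      ext u
      rw [← card_fiber_pos_iff, pos_iff_ne_zero, mem_filter_univ]
    rw [hl, Multiset.filter_map, himage, filter_val]
    rfl
  have hsum : l.sum = p := by
    rw [← Multiset.sum_coe, hl', ← Finset.sum, sum_image_card_fiber, ZMod.card]
  refine ⟨l, ?_, hsum, fun a => ?_, ?_⟩
  · rw [← Multiset.coe_card, hl', Multiset.card_map, card_val]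
  · rw [← Multiset.mem_coe, hl', Multiset.mem_map]
    rfl
  · rw [hsum]
    exact (card_fiber_mul_le hν w).trans (Nat.add_le_add_left
      ((sum_overlapCap_le e _ t w).trans (Nat.add_le_add_right hle _)) _)

lemma three_fibers_deficit : ∀ n ∈ Icc 1 5, ∀ a ∈ Icc 1 5, ∀ b ∈ Icc 1 5, ∀ c ∈ Icc 1 5,
    11 ≤ a + b + c → 6 * n + adjSum (overlapCap n) [a, b, c] ≤ n * (a + b + c) + 3 := by
  decide +kernel

lemma three_fibers_deficit_of_one_mem : ∀ n ∈ Icc 1 5, ∀ a ∈ Icc 1 5, ∀ b ∈ Icc 1 5,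
    ∀ c ∈ Icc 1 5, 11 ≤ a + b + c → 1 ∈ [a, b, c] →
      6 * n + adjSum (overlapCap n) [a, b, c] ≤ n * (a + b + c) + 1 := by
  decide +kernel

lemma four_fibers_deficit : ∀ n ∈ Icc 1 5, ∀ a ∈ Icc 1 5, ∀ b ∈ Icc 1 5, ∀ c ∈ Icc 1 5,
    ∀ d ∈ Icc 1 5, 11 ≤ a + b + c + d →
      6 * n + adjSum (fun i j => overlapCap n i j - 2) [a, b, c, d] + 4 ≤
        n * (a + b + c + d) + 2 := by
  decide +kernel

lemma four_fibers_deficit_of_dvd : ∀ n ∈ Icc 1 5, ∀ a ∈ Icc 1 5, ∀ b ∈ Icc 1 5, ∀ c ∈ Icc 1 5,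
    ∀ d ∈ Icc 1 5, 11 ≤ a + b + c + d → a + b + c + d ∣ b + 2 * c + 3 * d →
      6 * n + adjSum (overlapCap n) [a, b, c, d] ≤ n * (a + b + c + d) + 3 := by
  decide +kernel

lemma five_fibers_deficit : ∀ n ∈ Icc 1 5, ∀ a ∈ Icc 1 5, ∀ b ∈ Icc 1 5, ∀ c ∈ Icc 1 5,
    ∀ d ∈ Icc 1 5, ∀ e ∈ Icc 1 5, 17 ≤ a + b + c + d + e →
      6 * n + adjSum (overlapCap n) [a, b, c, d, e] ≤ n * (a + b + c + d + e) + 2 := by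
  decide +kernel

variable {w : ZMod p}

lemma card_fiber_mem_Icc (h5 : ∀ u, #(fiber e u) ≤ 5) {u : ZMod p} (hu : u ∈ univ.image e) :
    #(fiber e u) ∈ Icc 1 5 :=
  mem_Icc.2 ⟨card_fiber_pos_iff.2 hu, h5 u⟩

lemma six_mul_card_fiber_le_of_three (hp : 11 ≤ p) (hν : #(univ.image e) = 3)
    (h5 : ∀ u, #(fiber e u) ≤ 5) (hw : w ∈ univ.image e) (hw0 : w ≠ 0) :
    6 * #(fiber e w) ≤ ∑ y ∈ fiber e w, #(badRow e y) + 3 ∧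
      ((∃ u ∈ univ.image e, #(fiber e u) = 1) →
        6 * #(fiber e w) ≤ ∑ y ∈ fiber e w, #(badRow e y) + 1) := by
  obtain ⟨l, hlen, hsum, hmem, hle⟩ :=
    exists_list_card_fiber (e := e) (by omega) (by omega) hw0 0
  obtain ⟨a, b, c, rfl⟩ := List.length_eq_three.1 (hlen.trans hν)
  have hIcc : ∀ i ∈ [a, b, c], i ∈ Icc 1 5 := fun i hi => by
    obtain ⟨u, hu, rfl⟩ := (hmem i).1 hi
    exact card_fiber_mem_Icc h5 hu
  simp only [List.forall_mem_cons] at hIcc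
  obtain ⟨ha, hb, hc, -⟩ := hIcc
  rw [zero_mul] at hle
  simp only [List.sum_cons, List.sum_nil, tsub_zero, add_zero, ← add_assoc] at hle hsum
  change _ ≤ _ + adjSum (overlapCap _) _ at hle
  have hwIcc := card_fiber_mem_Icc h5 hw
  refine ⟨?_, fun h1 => ?_⟩
  · have := three_fibers_deficit _ hwIcc a ha b hb c hc (by omega)
    omega
  · have := three_fibers_deficit_of_one_mem _ hwIcc a ha b hb c hc (by omega) ((hmem 1).2 h1)
    omega

lemma six_mul_card_fiber_le_of_four (hp : 11 ≤ p) (hν : #(univ.image e) = 4)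
    (h5 : ∀ u, #(fiber e u) ≤ 5) (hw : w ∈ univ.image e) (hw0 : w ≠ 0)
    (hov : overlap (univ.image e) (univ.image e) w ≤ 2) :
    6 * #(fiber e w) ≤ ∑ y ∈ fiber e w, #(badRow e y) + 2 := by
  obtain ⟨l, hlen, hsum, hmem, hle⟩ :=
    exists_list_card_fiber (e := e) (by omega) (by omega) hw0 2
  match l, hlen.trans hν with
  | [a, b, c, d], _ =>
    have hIcc : ∀ i ∈ [a, b, c, d], i ∈ Icc 1 5 := fun i hi => by
      obtain ⟨u, hu, rfl⟩ := (hmem i).1 hi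
      exact card_fiber_mem_Icc h5 hu
    simp only [List.forall_mem_cons] at hIcc
    obtain ⟨ha, hb, hc, hd, -⟩ := hIcc
    simp only [List.sum_cons, List.sum_nil, add_zero, ← add_assoc] at hle hsum
    have := four_fibers_deficit _ (card_fiber_mem_Icc h5 hw) a ha b hb c hc d hd (by omega)
    omega

lemma six_mul_card_fiber_le_of_five (hp : 17 ≤ p) (hν : #(univ.image e) = 5)
    (h5 : ∀ u, #(fiber e u) ≤ 5) (hw : w ∈ univ.image e) (hw0 : w ≠ 0) :
    6 * #(fiber e w) ≤ ∑ y ∈ fiber e w, #(badRow e y) + 2 := by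
  obtain ⟨l, hlen, hsum, hmem, hle⟩ :=
    exists_list_card_fiber (e := e) (by omega) (by omega) hw0 0
  match l, hlen.trans hν with
  | [a, b, c, d, i], _ =>
    have hIcc : ∀ j ∈ [a, b, c, d, i], j ∈ Icc 1 5 := fun j hj => by
      obtain ⟨u, hu, rfl⟩ := (hmem j).1 hj
      exact card_fiber_mem_Icc h5 hu
    simp only [List.forall_mem_cons] at hIcc
    obtain ⟨ha, hb, hc, hd, hi, -⟩ := hIcc
    rw [zero_mul] at hle
    simp only [List.sum_cons, List.sum_nil, tsub_zero, add_zero, ← add_assoc] at hle hsum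
    change _ ≤ _ + adjSum (overlapCap _) _ at hle
    have := five_fibers_deficit _ (card_fiber_mem_Icc h5 hw) a ha b hb c hc d hd i hi (by omega)
    omega

lemma sum_image_range_add_natCast_mul {M : Type*} [AddCommMonoid M] {n : ℕ} (hn : n ≤ p)
    (hw0 : w ≠ 0) (c : ZMod p) (F : ZMod p → M) :
    ∑ u ∈ (range n).image (fun j : ℕ => c + j * w), F u = ∑ j ∈ range n, F (c + j * w) :=
  sum_image ((injOn_add_natCast_mul hw0 c).mono fun _ hj => (mem_range.1 hj).trans_le hn)

lemma dvd_sum_mul_card_fiber {n : ℕ} {c : ZMod p} (hn : n ≤ p) (hw0 : w ≠ 0)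
    (hsum : ∑ x, e x = 0) (hV : univ.image e = (range n).image fun j : ℕ => c + j * w) :
    p ∣ ∑ j ∈ range n, j * #(fiber e (c + j * w)) := by
  have hcard : ∑ j ∈ range n, (#(fiber e (c + j * w)) : ZMod p) = 0 := by
    rw [← sum_image_range_add_natCast_mul hn hw0 c fun u => (#(fiber e u) : ZMod p), ← hV,
      ← Nat.cast_sum, sum_image_card_fiber, ZMod.card, CharP.cast_eq_zero]
  have hvalues : ∑ j ∈ range n, #(fiber e (c + j * w)) • (c + (j : ZMod p) * w) = 0 := by
    rw [← sum_image_range_add_natCast_mul hn hw0 c fun u => #(fiber e u) • u, ← hV, ← hsum]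
    exact (sum_comp (fun u => u) e).symm
  rw [← ZMod.natCast_eq_zero_iff]
  refine (mul_eq_zero.1 ?_).resolve_right hw0
  calc ((∑ j ∈ range n, j * #(fiber e (c + j * w)) : ℕ) : ZMod p) * w
      = ∑ j ∈ range n, #(fiber e (c + j * w)) • (c + (j : ZMod p) * w) -
          (∑ j ∈ range n, (#(fiber e (c + j * w)) : ZMod p)) * c := by
        rw [Nat.cast_sum, sum_mul, sum_mul, ← sum_sub_distrib]
        refine sum_congr rfl fun j _ => ?_
        rw [nsmul_eq_mul]
        push_cast
        ring
    _ = 0 := by rw [hvalues, hcard, zero_mul, sub_zero]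

lemma six_mul_card_fiber_le_of_progression (hp : 11 ≤ p) (hν : #(univ.image e) = 4)
    (h5 : ∀ u, #(fiber e u) ≤ 5) (hsum : ∑ x, e x = 0) (hw : w ∈ univ.image e) (hw0 : w ≠ 0)
    (hov : 3 ≤ overlap (univ.image e) (univ.image e) w) :
    6 * #(fiber e w) ≤ ∑ y ∈ fiber e w, #(badRow e y) + 3 := by
  obtain ⟨c, hV⟩ := eq_image_range_of_card_le_overlap hw0 ⟨w, hw⟩ (by omega) (by omega)
  rw [hν] at hV
  have hcard := sum_image_card_fiber e
  have hdvd := dvd_sum_mul_card_fiber (by omega) hw0 hsum hV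
  have hIcc : ∀ j : ℕ, j < 4 → #(fiber e (c + j * w)) ∈ Icc 1 5 := fun j hj =>
    card_fiber_mem_Icc h5 (hV ▸ mem_image_of_mem _ (mem_range.2 hj))
  have hend : #(fiber e (c + (4 : ℕ) * w)) = 0 := by
    rw [← Nat.le_zero, ← not_lt, card_fiber_pos_iff, hV]
    intro h
    obtain ⟨j, hj, hj4⟩ := mem_image.1 h
    have hj' := mem_range.1 hj
    exact hj'.ne (injOn_add_natCast_mul hw0 c (Set.mem_Iio.2 (by omega))
      (Set.mem_Iio.2 (by omega)) hj4)
  have hrow := card_fiber_mul_le (e := e) (by omega) w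
  rw [hV, sum_image_range_add_natCast_mul (by omega) hw0] at hrow hcard
  simp only [sum_range_succ, range_zero, sum_empty, zero_add, zero_mul, one_mul, ZMod.card,
    add_assoc c, ← add_one_mul, ← Nat.cast_add_one, Nat.reduceAdd] at hrow hcard hdvd
  rw [hend, overlapCap_zero_right] at hrow
  have hdef := four_fibers_deficit_of_dvd _ (card_fiber_mem_Icc h5 hw) _ (hIcc 0 (by omega))
    _ (hIcc 1 (by omega)) _ (hIcc 2 (by omega)) _ (hIcc 3 (by omega)) (by omega) (by rwa [hcard])
  rw [hcard] at hdef
  simp only [adjSum] at hdef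
  omega

end SmallFibers

section LowerBound

variable {e : ZMod p → ZMod p}

lemma le_card_badPairs_of_deficits {d₀ : ℕ} {d : ZMod p → ℕ} (h0 : 0 ∈ univ.image e)
    (hd₀ : 6 * #(fiber e 0) ≤ ∑ y ∈ fiber e 0, #(badRow e y) + d₀)
    (hd : ∀ w ∈ univ.image e, w ≠ 0 →
      6 * #(fiber e w) ≤ ∑ y ∈ fiber e w, #(badRow e y) + d w)
    (hsum : d₀ + ∑ w ∈ (univ.image e).erase 0, d w ≤ 18) : 6 * p - 18 ≤ #(badPairs e) := by
  have h := mul_card_le_card_badPairs_add (f := e) (n := 6) (d := Function.update d 0 d₀)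
    fun w hw => by
      rcases eq_or_ne w 0 with rfl | hw0
      · simpa using hd₀
      · simpa [hw0] using hd w hw hw0
  rw [ZMod.card, ← add_sum_erase _ _ h0, Function.update_self,
    sum_congr rfl fun w hw => Function.update_of_ne (ne_of_mem_erase hw) _ _] at h
  omega

lemma le_sum_card_badRow_fiber_zero_of_le {n r : ℕ} (hp : 5 ≤ p) (hn : 3 ≤ n)
    (hν : n ≤ #(univ.image e)) (hr : r ≤ #((univ.image e).filter fun u => 2 ≤ #(fiber e u))) :
    n * (#(fiber e 0) - 1) + r * (#(fiber e 0) - 3) ≤ ∑ y ∈ fiber e 0, #(badRow e y) :=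
  (Nat.add_le_add (Nat.mul_le_mul_right _ hν) (Nat.mul_le_mul_right _ hr)).trans
    (le_sum_card_badRow_fiber_zero hp (hn.trans hν))

lemma le_card_badPairs_of_three (hp : 11 ≤ p) (hν : #(univ.image e) = 3)
    (h5 : ∀ u, #(fiber e u) ≤ 5) (h0 : 0 ∈ univ.image e) : 6 * p - 18 ≤ #(badPairs e) := by
  have hcard : #((univ.image e).erase 0) = 2 := by rw [card_erase_of_mem h0, hν]
  have hk := h5 0
  by_cases h1 : ∃ u ∈ univ.image e, #(fiber e u) = 1
  · refine le_card_badPairs_of_deficits (d₀ := 14) (d := fun _ => 1) h0 ?_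
      (fun w hw hw0 => (six_mul_card_fiber_le_of_three hp hν h5 hw hw0).2 h1) (by simp [hcard])
    have hr := le_card_image_add_mul_card_filter h5
    rw [ZMod.card] at hr
    have := le_sum_card_badRow_fiber_zero_of_le (r := 2) (by omega) (by simp) hν.ge
      (by omega)
    omega
  · refine le_card_badPairs_of_deficits (d₀ := 12) (d := fun _ => 3) h0 ?_
      (fun w hw hw0 => (six_mul_card_fiber_le_of_three hp hν h5 hw hw0).1) (by simp [hcard])
    push Not at h1
    have hall : (univ.image e).filter (fun u => 2 ≤ #(fiber e u)) = univ.image e :=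
      filter_true_of_mem fun u hu => by
        have := card_fiber_pos_iff.2 hu
        have := h1 u hu
        omega
    have := le_sum_card_badRow_fiber_zero_of_le (r := 3) (by omega) (by simp) hν.ge
      (by rw [hall, hν])
    omega

lemma le_card_badPairs_of_four (hp : 11 ≤ p) (hν : #(univ.image e) = 4)
    (h5 : ∀ u, #(fiber e u) ≤ 5) (h0 : 0 ∈ univ.image e) (hsum : ∑ x, e x = 0) :
    6 * p - 18 ≤ #(badPairs e) := by
  refine le_card_badPairs_of_deficits (d₀ := 10) (d := fun w =>
    2 + if #(univ.image e) ≤ overlap (univ.image e) (univ.image e) w + 1 then 1 else 0) h0 ?_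
    (fun w hw hw0 => ?_) ?_
  · have hk := h5 0
    have hr := le_card_image_add_mul_card_filter h5
    rw [ZMod.card] at hr
    have := le_sum_card_badRow_fiber_zero_of_le (r := 2) (by omega) (by simp) hν.ge
      (by omega)
    omega
  · split_ifs with hov
    · exact six_mul_card_fiber_le_of_progression hp hν h5 hsum hw hw0 (by omega)
    · exact six_mul_card_fiber_le_of_four hp hν h5 hw hw0 (by omega)
  · have htwo := card_filter_card_le_overlap_le_two (E := univ.image e) (by omega) (by omega)
      (by omega) (notMem_erase 0 (univ.image e))
    rw [sum_add_distrib, sum_const, card_erase_of_mem h0, ← card_filter, smul_eq_mul]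
    omega

lemma le_card_badPairs_of_five (hp : 17 ≤ p) (hν : #(univ.image e) = 5)
    (h5 : ∀ u, #(fiber e u) ≤ 5) (h0 : 0 ∈ univ.image e) : 6 * p - 18 ≤ #(badPairs e) := by
  refine le_card_badPairs_of_deficits (d₀ := 8) (d := fun _ => 2) h0 ?_
    (fun w hw hw0 => six_mul_card_fiber_le_of_five hp hν h5 hw hw0)
    (by rw [sum_const, card_erase_of_mem h0, hν]; simp)
  have hk := h5 0
  have hr := le_card_image_add_mul_card_filter h5
  rw [ZMod.card] at hr
  have := le_sum_card_badRow_fiber_zero_of_le (r := 1) (by omega) (by simp) hν.ge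
      (by omega)
  omega

lemma le_card_badPairs_of_card_image (hp : 11 ≤ p) (hν : 3 ≤ #(univ.image e))
    (h0 : 0 ∈ univ.image e) (hsum : ∑ x, e x = 0)
    (hrow : ∀ y ≠ 0, #(univ.image e) ≤ #(badRow e y)) : 6 * p - 18 ≤ #(badPairs e) := by
  by_cases hν6 : 6 ≤ #(univ.image e)
  · have := mul_le_card_badPairs fun y hy => hν6.trans (hrow y hy)
    rw [ZMod.card] at this
    omega
  by_cases h6 : ∃ u, 6 ≤ #(fiber e u)
  · obtain ⟨u, hu⟩ := h6
    exact le_card_badPairs_of_six_le_card_fiber (by omega) hν (by omega)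
      (card_fiber_pos_iff.2 h0) hu
  push Not at h6
  have h5 : ∀ u, #(fiber e u) ≤ 5 := fun u => Nat.le_of_lt_succ (h6 u)
  obtain hν | hν | hν : #(univ.image e) = 3 ∨ #(univ.image e) = 4 ∨ #(univ.image e) = 5 := by omega
  · exact le_card_badPairs_of_three hp hν h5 h0
  · exact le_card_badPairs_of_four hp hν h5 h0 hsum
  rcases le_or_gt 17 p with hp17 | hp17
  · exact le_card_badPairs_of_five hp17 hν h5 h0
  · have hp13 : p ≤ 13 := by
      have := Fact.out (p := p.Prime)
      by_contra! h
      interval_cases p <;> norm_num at this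
    have := mul_le_card_badPairs fun y hy => hν.ge.trans (hrow y hy)
    rw [ZMod.card] at this
    omega

end LowerBound

section Normalization

lemma card_image_le_card_badRow {e : ZMod p → ZMod p} {a : ZMod p} (ha : a ≠ 0) (hea : e a = 0)
    (hne : ∃ x, e x ≠ 0) : #(univ.image e) ≤ #(badRow e a) := by
  refine (card_le_card fun u hu => ?_).trans (card_image_le (f := e))
  obtain ⟨t, -, rfl⟩ := mem_image.1 hu
  -- A level set of `e` that misses `badRow e a` is invariant under translation by `a`.
  by_contra hmiss
  have hconst := mem_of_forall_add_mem (S := {s | e s = e t}) ha (fun s hs => by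
    by_contra hs'
    refine hmiss (mem_image.2 ⟨s, mem_badRow.2 fun hadd => hs' ?_, hs⟩)
    rw [hea, add_zero] at hadd
    exact hadd.trans hs) rfl
  obtain ⟨x, hx⟩ := hne
  exact hx ((hconst x).trans ((hconst a).symm.trans hea))

lemma three_le_card_image {e : ZMod p → ZMod p} {c : ZMod p}
    (hinj : Function.Injective fun x => e x + c * x) (hc : c ≠ 0) (h0 : 0 ∈ univ.image e)
    (hne : ∃ x, e x ≠ 0) : 3 ≤ #(univ.image e) := by
  obtain ⟨x, hx⟩ := hne
  obtain ⟨z, -, hz⟩ := mem_image.1 h0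
  by_contra! hlt
  have hpair : {0, e x} = univ.image e := by
    refine eq_of_subset_of_card_le ?_ (by rw [card_pair hx.symm]; omega)
    simpa [insert_subset_iff] using ⟨z, hz⟩
  refine hx ((mem_of_forall_add_mem (S := {y | e y = e x}) (div_ne_zero hx hc)
    (fun y (hy : e y = e x) => ?_) rfl z).symm.trans hz)
  have hmem : e (y + e x / c) ∈ ({0, e x} : Finset (ZMod p)) :=
    hpair ▸ mem_image_of_mem e (mem_univ _)
  refine (mem_insert.1 hmem).elim (fun h => ?_) mem_singleton.1
  have hcollide : y + e x / c = y := hinj <| by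
    simp only [h, hy]
    field_simp
    ring
  exact absurd (add_eq_left.1 hcollide) (div_ne_zero hx hc)

lemma sum_sub_mul_eq_zero {f : ZMod p → ZMod p} (hf : Function.Injective f) (hp : 2 < p)
    (c : ZMod p) : ∑ x, (f x - c * x) = 0 := by
  have hsum : ∑ x : ZMod p, x = 0 := by
    simpa using FiniteField.sum_pow_lt_card_sub_one (ZMod p) 1 (by rw [ZMod.card]; omega)
  rw [sum_sub_distrib, ← mul_sum, (Finite.injective_iff_bijective.1 hf).sum_comp fun x => x, hsum,
    mul_zero, sub_zero]

theorem le_card_badPairs {f : ZMod p → ZMod p} (hf : Function.Injective f) (hp : 11 ≤ p)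
    (hbad : (badPairs f).Nonempty) : 6 * p - 18 ≤ #(badPairs f) := by
  obtain ⟨a, ha, hmin⟩ := exists_min_image (univ.erase 0) (fun y => #(badRow f y))
    ⟨1, mem_erase.2 ⟨one_ne_zero, mem_univ _⟩⟩
  replace ha := ne_of_mem_erase ha
  replace hmin : ∀ y ≠ 0, #(badRow f a) ≤ #(badRow f y) := fun y hy =>
    hmin y (mem_erase.2 ⟨hy, mem_univ y⟩)
  by_cases hfa : f a = 0
  · have := mul_le_card_badPairs hmin
    rw [badRow_eq_univ hf ha hfa, card_univ, ZMod.card] at this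
    have := Nat.mul_le_mul_right (p - 1) hp
    omega
  set c := f a / a with hc
  set e : ZMod p → ZMod p := fun x => f x - c * x with he
  have hea : e a = 0 := by simp [he, hc, ha]
  have hrows : ∀ y, badRow e y = badRow f y := badRow_sub_addMonoidHom f (.mulLeft c)
  have hcard : #(badPairs e) = #(badPairs f) := by simp only [card_badPairs, hrows]
  have h0 : 0 ∈ univ.image e := mem_image.2 ⟨a, mem_univ a, hea⟩
  have hne : ∃ x, e x ≠ 0 := by
    by_contra! hzero
    obtain ⟨q, hq⟩ := card_pos.1 (hcard ▸ card_pos.2 hbad)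
    simp [badPairs, hzero] at hq
  rw [← hcard]
  refine le_card_badPairs_of_card_image hp
    (three_le_card_image (c := c) (by simpa [he] using hf) (div_ne_zero hfa ha) h0 hne) h0
    (sum_sub_mul_eq_zero hf (by omega) c) fun y hy => ?_
  refine (card_image_le_card_badRow ha hea hne).trans ?_
  simpa only [hrows] using hmin y hy

end Normalization

section SwapNeg

variable {G : Type*} [AddCommGroup G] [DecidableEq G] {a : G}

lemma swap_neg_apply_zero (ha : a ≠ 0) : Equiv.swap a (-a) 0 = 0 :=
  Equiv.swap_apply_of_ne_of_ne ha.symm (neg_ne_zero.2 ha).symm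

variable [Fintype G]

lemma badRow_swap_neg_zero (ha : a ≠ 0) : badRow (Equiv.swap a (-a)) 0 = ∅ := by
  ext x
  simp [mem_badRow, swap_neg_apply_zero ha]

lemma badRow_swap_neg_subset {y : G} (hy : y ≠ a) (hy' : y ≠ -a) :
    badRow (Equiv.swap a (-a)) y ⊆ {a, -a, a - y, -a - y} := by
  intro x hx
  by_contra hnot
  simp only [mem_insert, mem_singleton, not_or, eq_sub_iff_add_eq] at hnot
  obtain ⟨hxa, hxa', hxy, hxy'⟩ := hnot
  refine mem_badRow.1 hx ?_
  rw [Equiv.swap_apply_of_ne_of_ne hxy hxy', Equiv.swap_apply_of_ne_of_ne hxa hxa',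
    Equiv.swap_apply_of_ne_of_ne hy hy']

lemma card_badRow_swap_neg_le_four {y : G} (hy : y ≠ a) (hy' : y ≠ -a) :
    #(badRow (Equiv.swap a (-a)) y) ≤ 4 :=
  (card_le_card (badRow_swap_neg_subset hy hy')).trans card_le_four

lemma card_badRow_swap_neg_two_nsmul_le (ha : a ≠ 0) (ha3 : 3 • a ≠ 0) :
    #(badRow (Equiv.swap a (-a)) (2 • a)) ≤ 3 := by
  have hsub := badRow_swap_neg_subset (y := 2 • a) (a := a) (by grind) (by grind)
  rw [show a - 2 • a = -a by grind] at hsub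
  exact (card_le_card hsub).trans (by grind [card_le_three])

lemma card_badRow_swap_neg_self_add_two_le (ha : a ≠ 0) :
    #(badRow (Equiv.swap a (-a)) a) + 2 ≤ Fintype.card G := by
  have hsub : badRow (Equiv.swap a (-a)) a ⊆ {0, -a}ᶜ := by
    refine subset_compl_iff_disjoint_right.2 ?_
    simp [mem_badRow, swap_neg_apply_zero ha]
  have hcard := card_le_card hsub
  have hpair : #{0, -a} = 2 := card_pair (neg_ne_zero.2 ha).symm
  have := card_add_card_compl ({0, -a} : Finset G)
  omega

lemma card_badPairs_swap_neg_add_le (ha2 : 2 • a ≠ 0) (ha3 : 3 • a ≠ 0) (ha4 : 4 • a ≠ 0) :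
    #(badPairs (Equiv.swap a (-a))) + 18 ≤ 6 * Fintype.card G := by
  have ha : a ≠ 0 := by rintro rfl; simp at ha2
  set r : G → ℕ := fun y => #(badRow (Equiv.swap a (-a)) y) with hr
  set S : Finset G := {0, a, -a, 2 • a, 2 • -a} with hS
  have h1 : 0 ∉ ({a, -a, 2 • a, 2 • -a} : Finset G) := by grind
  have h2 : a ∉ ({-a, 2 • a, 2 • -a} : Finset G) := by grind
  have h3 : -a ∉ ({2 • a, 2 • -a} : Finset G) := by grind
  have h4 : 2 • a ≠ 2 • -a := by grind
  have hScard : #S = 5 := by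
    rw [hS, card_insert_of_notMem h1, card_insert_of_notMem h2, card_insert_of_notMem h3,
      card_pair h4]
  have hS_sum : ∑ y ∈ S, r y = r 0 + (r a + (r (-a) + (r (2 • a) + r (2 • -a)))) := by
    rw [hS, sum_insert h1, sum_insert h2, sum_insert h3, sum_pair h4]
  have hzero : r 0 = 0 := by simp [hr, badRow_swap_neg_zero ha]
  have hself : r a + 2 ≤ Fintype.card G := card_badRow_swap_neg_self_add_two_le ha
  have hneg : r (-a) + 2 ≤ Fintype.card G := by
    simpa [hr, Equiv.swap_comm] using card_badRow_swap_neg_self_add_two_le (neg_ne_zero.2 ha)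
  have htwo : r (2 • a) ≤ 3 := card_badRow_swap_neg_two_nsmul_le ha ha3
  have hneg_two : r (2 • -a) ≤ 3 := by
    simpa [hr, Equiv.swap_comm] using
      card_badRow_swap_neg_two_nsmul_le (neg_ne_zero.2 ha) (by simpa using ha3)
  have hrest : ∑ y ∈ Sᶜ, r y ≤ #Sᶜ * 4 := sum_le_card_nsmul _ _ _ fun y hy => by
    simp only [hS, mem_compl, mem_insert, not_or] at hy
    exact card_badRow_swap_neg_le_four hy.2.1 hy.2.2.1
  have htotal := sum_add_sum_compl S r
  rw [← card_badPairs] at htotal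
  have := card_add_card_compl S
  omega

lemma exists_perm_card_badPairs_le (hp : 5 ≤ p) :
    ∃ σ : Equiv.Perm (ZMod p), (badPairs σ).Nonempty ∧ #(badPairs σ) ≤ 6 * p - 18 := by
  have hne (n : ℕ) (hn : n ≠ 0) (hnp : n < p) : n • (1 : ZMod p) ≠ 0 :=
    nsmul_one (A := ZMod p) n ▸ natCast_ne_zero_of_lt hn hnp
  have h2 := hne 2 (by omega) (by omega)
  have h3 := hne 3 (by omega) (by omega)
  have h4 := hne 4 (by omega) (by omega)
  refine ⟨Equiv.swap 1 (-1), ⟨(1, 1), ?_⟩, ?_⟩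
  · have hfix : Equiv.swap (1 : ZMod p) (-1) (1 + 1) = 1 + 1 :=
      Equiv.swap_apply_of_ne_of_ne (by simp) (by grind)
    simp only [badPairs, mem_filter, mem_univ, true_and, hfix, Equiv.swap_apply_left]
    grind
  · have := card_badPairs_swap_neg_add_le h2 h3 h4
    rw [ZMod.card] at this
    omega

end SwapNeg

section Transfer

lemma IsGroupOp.exists_equiv_zmod {G : Type*} [Fintype G] {star : G → G → G} (h : IsGroupOp star)
    (hcard : Fintype.card G = p) : ∃ φ : G ≃ ZMod p, ∀ a b, φ (star a b) = φ a + φ b := by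
  obtain ⟨e, inv, hassoc, hleft, hright, hinv, -⟩ := h
  let _ : Group G :=
    { mul := star, one := e, inv := inv, mul_assoc := hassoc, one_mul := hleft,
      mul_one := hright, inv_mul_cancel := hinv }
  let φ : G ≃* Multiplicative (ZMod p) := mulEquivOfPrimeCardEq (p := p)
    (by rw [Nat.card_eq_fintype_card, hcard])
    (by rw [Nat.card_congr Multiplicative.toAdd, Nat.card_zmod])
  exact ⟨φ.toEquiv.trans Multiplicative.toAdd, fun a b => congrArg Multiplicative.toAdd
    (φ.map_mul a b)⟩

lemma isGroupOp_mul (G : Type*) [Group G] : IsGroupOp fun a b : G => a * b :=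
  ⟨1, fun a => a⁻¹, mul_assoc, one_mul, mul_one, inv_mul_cancel, mul_inv_cancel⟩

lemma isGroupOp_of_equiv {G H : Type*} [AddGroup H] (φ : G ≃ H) :
    IsGroupOp fun a b => φ.symm (φ a + φ b) :=
  ⟨φ.symm 0, fun a => φ.symm (-φ a), by simp [add_assoc], by simp, by simp, by simp, by simp⟩

lemma opDist_pos_iff {G : Type*} [Fintype G] [DecidableEq G] {s t : G → G → G} :
    0 < opDist s t ↔ t ≠ s := by
  simp [opDist, card_pos, Finset.Nonempty, funext_iff, eq_comm]

lemma opDist_eq_card_badPairs {G H : Type*} [Fintype G] [DecidableEq G] [Fintype H]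
    [DecidableEq H] [Add H] {s t : G → G → G} {ψ φ : G ≃ H}
    (hψ : ∀ a b, ψ (s a b) = ψ a + ψ b) (hφ : ∀ a b, φ (t a b) = φ a + φ b) :
    opDist s t = #(badPairs fun x => φ (ψ.symm x)) := by
  refine card_equiv (ψ.prodCongr ψ) fun q => ?_
  simp [badPairs, ← hψ, ← hφ]

variable {G : Type*} [Fintype G] [DecidableEq G] {s t : G → G → G}

lemma IsGroupOp.le_opDist (hs : IsGroupOp s) (ht : IsGroupOp t) (hts : t ≠ s) (hp : 11 ≤ p)
    (hcard : Fintype.card G = p) : 6 * p - 18 ≤ opDist s t := by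
  obtain ⟨ψ, hψ⟩ := hs.exists_equiv_zmod hcard
  obtain ⟨φ, hφ⟩ := ht.exists_equiv_zmod hcard
  have hdist := opDist_eq_card_badPairs hψ hφ
  rw [hdist]
  exact le_card_badPairs (φ.injective.comp ψ.symm.injective) hp
    (card_pos.1 (hdist ▸ opDist_pos_iff.2 hts))

lemma IsGroupOp.exists_opDist_le (hs : IsGroupOp s) (hp : 5 ≤ p) (hcard : Fintype.card G = p) :
    ∃ t, IsGroupOp t ∧ t ≠ s ∧ opDist s t ≤ 6 * p - 18 := by
  obtain ⟨ψ, hψ⟩ := hs.exists_equiv_zmod hcard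
  obtain ⟨σ, hσ, hσ_le⟩ := exists_perm_card_badPairs_le hp
  set φ := ψ.trans σ with hφ
  have hdist : opDist s (fun a b => φ.symm (φ a + φ b)) = #(badPairs σ) := by
    rw [opDist_eq_card_badPairs hψ (φ := φ) (by simp)]
    simp [hφ]
  exact ⟨_, isGroupOp_of_equiv φ, opDist_pos_iff.1 (hdist ▸ card_pos.2 hσ), hdist ▸ hσ_le⟩

end Transfer

end AdditivityDefects

/-- for a prime `p > 7` and a group `(G,∘)` of order `p`,
`δ(G,∘) = 6p − 18`. -/
theorem delta_of_group_of_prime_order {G : Type*} [Group G] [Fintype G]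
    [DecidableEq G] (p : ℕ) (hp : p.Prime) (hp7 : 7 < p)
    (hcard : Fintype.card G = p) :
    groupDelta G = 6 * p - 18 := by
  have : Fact p.Prime := ⟨hp⟩
  have hp11 : 11 ≤ p := by
    by_contra! h
    interval_cases p <;> norm_num at hp
  have hmul := isGroupOp_mul G
  obtain ⟨star, hstar, hne, hle⟩ := hmul.exists_opDist_le (by omega) hcard
  refine IsLeast.csInf_eq ⟨⟨star, hstar, hne, ?_⟩, ?_⟩
  · exact (hmul.le_opDist hstar hne hp11 hcard).antisymm hle
  · rintro d ⟨star', hstar', hne', rfl⟩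
    exact hmul.le_opDist hstar' hne' hp11 hcard
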